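/- Let X ∈ O_{m×r} and Y ∈ ℝ^{m×p} with 1 ≤ r ≤ m. If X satisfies the uniqueness conditions for (Y,r), then the problem of minimizing ‖Z − X‖_F² over Z ∈ H_{Y,r} has a unique solution. -/

import Mathlib

open Matrix BigOperators Filter

/-- The squared Frobenius norm of a real matrix. -/
def froSq {ι κ : Type*} [Fintype ι] [Fintype κ] (M : Matrix ι κ ℝ) : ℝ :=
  ∑ i, ∑ j, (M i j) ^ 2

/-- The Frobenius norm of a real matrix. -/
noncomputable def fro {ι κ : Type*} [Fintype ι] [Fintype κ] (M : Matrix ι κ ℝ) : ℝ :=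
  Real.sqrt (froSq M)

/-- The eigenvalues of `Y * Yᴴ`, sorted in descending order. -/
noncomputable def eigList {m : ℕ} {κ : Type*} [Fintype κ] (Y : Matrix (Fin m) κ ℝ) : List ℝ :=
  ((((Finset.univ : Finset (Fin m)).val.map
      (fun j => (Matrix.isHermitian_mul_conjTranspose_self Y).eigenvalues j)).sort (· ≤ ·)).reverse)

/-- The `i`-th largest singular value (1-indexed) of a real matrix, with the
convention that it is `0` beyond the smaller matrix dimension. -/
noncomputable def sval {m : ℕ} {κ : Type*} [Fintype κ] (Y : Matrix (Fin m) κ ℝ) (i : ℕ) : ℝ :=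
  Real.sqrt ((eigList Y).getD (i - 1) 0)

/-- The set of `m × r` real matrices with orthonormal columns. -/
def Stiefel (m r : ℕ) : Set (Matrix (Fin m) (Fin r) ℝ) :=
  {Z | Zᵀ * Z = 1}

/-- `H_{Y,r}`: the set of maximizers of `‖Zᵀ Y‖_F²` over the Stiefel manifold. -/
def HSet {m p : ℕ} (Y : Matrix (Fin m) (Fin p) ℝ) (r : ℕ) : Set (Matrix (Fin m) (Fin r) ℝ) :=
  {Z | Z ∈ Stiefel m r ∧ ∀ W ∈ Stiefel m r, froSq (Wᵀ * Y) ≤ froSq (Zᵀ * Y)}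

/-- The nuclear norm: the sum of all singular values. -/
noncomputable def nuclearNorm {a b : ℕ} (M : Matrix (Fin a) (Fin b) ℝ) : ℝ :=
  ∑ i ∈ Finset.range (min a b), sval M (i + 1)

/-- `U` maximizes `‖Uᵀ X‖_*` over `H_{Y,r}`. -/
def NucMax {m p r : ℕ} (Y : Matrix (Fin m) (Fin p) ℝ) (X U : Matrix (Fin m) (Fin r) ℝ) : Prop :=
  U ∈ HSet Y r ∧ ∀ V ∈ HSet Y r, nuclearNorm (Vᵀ * X) ≤ nuclearNorm (Uᵀ * X)

/-- The uniqueness conditions for `(Y, r)` at `X`. -/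
def UniqCond {m p : ℕ} (Y : Matrix (Fin m) (Fin p) ℝ) (r : ℕ)
    (X : Matrix (Fin m) (Fin r) ℝ) : Prop :=
  (∀ U, NucMax Y X U → (Uᵀ * X).det ≠ 0) ∧
  (∀ U₁ U₂, NucMax Y X U₁ → NucMax Y X U₂ → U₁ * U₁ᵀ = U₂ * U₂ᵀ)

/-- `Z` is a minimizer of `‖Z − X‖_F²` over `H_{Y,r}`. -/
def IsProj {m p r : ℕ} (Y : Matrix (Fin m) (Fin p) ℝ) (X Z : Matrix (Fin m) (Fin r) ℝ) : Prop :=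
  Z ∈ HSet Y r ∧ ∀ W ∈ HSet Y r, froSq (Z - X) ≤ froSq (W - X)

/-- The trace inner product of two matrices. -/
noncomputable def tinner {a b : ℕ} (A B : Matrix (Fin a) (Fin b) ℝ) : ℝ :=
  Matrix.trace (Aᵀ * B)

/-!
For `Z` with orthonormal columns, `‖Z - X‖² = r + ‖X‖² - 2⟨Z, X⟩`, so projecting `X` onto `H_{Y,r}`
means maximizing `⟨Z, X⟩`. As `H_{Y,r}` is stable under `Z ↦ ZQ` with `Q` orthogonal and
`max_Q ⟨ZQ, X⟩ = ‖ZᵀX‖_*`, a projection `Z` maximizes the nuclear norm and satisfies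
`⟨Z, X⟩ = ‖ZᵀX‖_*`. The uniqueness conditions give two projections `Z, T` the same column space,
hence `T = ZQ` with `Q = ZᵀT` orthogonal, and both `Q` and `1` maximize `⟨·, ZᵀX⟩`. Writing the
polar decomposition `ZᵀX = S U`, the identity `⟨Q - U, S(Q - U)⟩ = 2(tr S - ⟨Q, S U⟩)` shows that
`Q = U` is the only maximizer when `S` is invertible, so `Q = 1`.
-/

section PolarDecomposition

open scoped ComplexOrder MatrixOrder

variable {𝕜 : Type*} [RCLike 𝕜]

theorem exists_linearIsometry_apply_eq_of_norm_eq {E V : Type*} [AddCommGroup E] [Module 𝕜 E]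
    [NormedAddCommGroup V] [InnerProductSpace 𝕜 V] [FiniteDimensional 𝕜 V] {f g : E →ₗ[𝕜] V}
    (h : ∀ x, ‖f x‖ = ‖g x‖) : ∃ L : V →ₗᵢ[𝕜] V, ∀ x, L (f x) = g x := by
  obtain ⟨s, hs⟩ := f.rangeRestrict.exists_rightInverse_of_surjective f.range_rangeRestrict
  have f_section (y : f.range) : f (s y) = y := congr_arg Subtype.val (LinearMap.congr_fun hs y)
  let L₀ : f.range →ₗᵢ[𝕜] V :=
    ⟨g ∘ₗ s, fun y ↦ by rw [LinearMap.comp_apply, ← h, f_section, Submodule.coe_norm]⟩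
  refine ⟨L₀.extend, fun x ↦ ?_⟩
  have hfx : f (s (f.rangeRestrict x)) = f x := f_section (f.rangeRestrict x)
  have hgx : g (s (f.rangeRestrict x)) = g x := by
    rw [← sub_eq_zero, ← map_sub, ← norm_eq_zero, ← h, map_sub, hfx, sub_self, norm_zero]
  exact (L₀.extend_apply (f.rangeRestrict x)).trans hgx

variable {k n : Type*} [Fintype k]

theorem norm_sq_toEuclideanLin_apply [Fintype n] [DecidableEq n] (A : Matrix k n 𝕜)
    (x : EuclideanSpace 𝕜 n) :
    (‖A.toEuclideanLin x‖ ^ 2 : 𝕜) = inner 𝕜 x ((Aᴴ * A).toEuclideanLin x) := by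
  classical
  rw [← inner_self_eq_norm_sq_to_K, ← LinearMap.adjoint_inner_right,
    ← toEuclideanLin_conjTranspose_eq_adjoint, toEuclideanLin, toLpLin_mul 2 2 2,
    LinearMap.comp_apply]

theorem exists_mem_unitaryGroup_toEuclideanLin_eq [DecidableEq k]
    (L : EuclideanSpace 𝕜 k →ₗᵢ[𝕜] EuclideanSpace 𝕜 k) :
    ∃ U ∈ unitaryGroup k 𝕜, U.toEuclideanLin = L.toLinearMap := by
  obtain ⟨U, hU⟩ := (toEuclideanLin (m := k) (n := k) (𝕜 := 𝕜)).surjective L.toLinearMap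
  refine ⟨U, mem_unitaryGroup_iff'.mpr (toEuclideanLin.injective ?_), hU⟩
  rw [star_eq_conjTranspose, toLpLin_mul 2 2 2, toEuclideanLin_conjTranspose_eq_adjoint, hU,
    toLpLin_one]
  exact LinearMap.ext fun x ↦ ext_inner_left 𝕜 fun y ↦ by
    rw [LinearMap.comp_apply, LinearMap.adjoint_inner_right]
    exact L.inner_map_map y x

theorem exists_mem_unitaryGroup_mul_eq [DecidableEq k] [Finite n] {A B : Matrix k n 𝕜}
    (h : Aᴴ * A = Bᴴ * B) : ∃ U ∈ unitaryGroup k 𝕜, U * A = B := by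
  classical
  have := Fintype.ofFinite n
  have norm_eq (x : EuclideanSpace 𝕜 n) : ‖A.toEuclideanLin x‖ = ‖B.toEuclideanLin x‖ := by
    have norm_sq_eq : (‖A.toEuclideanLin x‖ ^ 2 : 𝕜) = (‖B.toEuclideanLin x‖ ^ 2 : 𝕜) := by
      rw [norm_sq_toEuclideanLin_apply, norm_sq_toEuclideanLin_apply, h]
    rw [← sq_eq_sq₀ (norm_nonneg _) (norm_nonneg _)]
    exact_mod_cast norm_sq_eq
  obtain ⟨L, hL⟩ := exists_linearIsometry_apply_eq_of_norm_eq norm_eq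
  obtain ⟨U, hU, hUL⟩ := exists_mem_unitaryGroup_toEuclideanLin_eq L
  refine ⟨U, hU, toEuclideanLin.injective (LinearMap.ext fun x ↦ ?_)⟩
  rw [toLpLin_mul 2 2 2, LinearMap.comp_apply, hUL]
  exact hL x

variable [Fintype n] [DecidableEq n]

theorem exists_polar_decomposition (M : Matrix n n 𝕜) :
    ∃ U ∈ unitaryGroup n 𝕜, CFC.sqrt (M * Mᴴ) * U = M := by
  have hS : (CFC.sqrt (M * Mᴴ))ᴴ = CFC.sqrt (M * Mᴴ) :=
    (CFC.sqrt_nonneg (M * Mᴴ)).posSemidef.isHermitian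
  have hSS : (CFC.sqrt (M * Mᴴ))ᴴ * CFC.sqrt (M * Mᴴ) = Mᴴᴴ * Mᴴ := by
    rw [hS, conjTranspose_conjTranspose,
      CFC.sqrt_mul_sqrt_self _ (posSemidef_self_mul_conjTranspose M).nonneg]
  obtain ⟨U, hU, hUS⟩ := exists_mem_unitaryGroup_mul_eq hSS
  refine ⟨star U, Unitary.star_mem hU, ?_⟩
  simpa [hS, star_eq_conjTranspose] using congr_arg conjTranspose hUS

theorem trace_cfc {A : Matrix n n 𝕜} (hA : A.IsHermitian) (f : ℝ → ℝ) :
    (cfc f A).trace = ∑ i, (f (hA.eigenvalues i) : 𝕜) := by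
  rw [hA.cfc_eq, Matrix.IsHermitian.cfc, Unitary.conjStarAlgAut_apply, trace_mul_cycle,
    Unitary.coe_star_mul_self, Matrix.one_mul, trace_diagonal]
  rfl

theorem trace_sqrt {A : Matrix n n 𝕜} (hA : A.PosSemidef) :
    (CFC.sqrt A).trace = ∑ i, (√(hA.isHermitian.eigenvalues i) : 𝕜) := by
  rw [CFC.sqrt_eq_real_sqrt A hA.nonneg, cfcₙ_eq_cfc, trace_cfc hA.isHermitian]

end PolarDecomposition

section TraceMaximization

variable {k n : Type*} [Fintype k] [Fintype n]

theorem trace_transpose_mul_mul_comm {S : Matrix n n ℝ} (hS : S.IsSymm) (Q U : Matrix n k ℝ) :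
    trace (Uᵀ * (S * Q)) = trace (Qᵀ * (S * U)) := by
  rw [← trace_transpose]
  simp only [transpose_mul, transpose_transpose, hS.eq, Matrix.mul_assoc]

open scoped MatrixOrder in
theorem mul_eq_zero_of_trace_transpose_mul_mul_eq_zero {S : Matrix n n ℝ}
    {Q : Matrix n k ℝ} (hS : S.PosSemidef) (h : trace (Qᵀ * (S * Q)) = 0) : S * Q = 0 := by
  classical
  obtain ⟨B, rfl⟩ := CStarAlgebra.nonneg_iff_eq_star_mul_self.mp hS.nonneg
  have hBQ : B * Q = 0 := by
    rw [← trace_conjTranspose_mul_self_eq_zero_iff]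
    simpa [star_eq_conjTranspose, Matrix.mul_assoc] using h
  rw [Matrix.mul_assoc, hBQ, Matrix.mul_zero]

variable [DecidableEq n] {S : Matrix n n ℝ} {Q U : Matrix n k ℝ}

theorem trace_transpose_mul_mul_self (S : Matrix n n ℝ) (hQ : Q * Qᵀ = 1) :
    trace (Qᵀ * (S * Q)) = trace S := by
  rw [trace_mul_comm, Matrix.mul_assoc, hQ, Matrix.mul_one]

theorem trace_sub_transpose_mul_mul_sub (hS : S.IsSymm) (hQ : Q * Qᵀ = 1) (hU : U * Uᵀ = 1) :
    trace ((Q - U)ᵀ * (S * (Q - U))) = 2 * (trace S - trace (Qᵀ * (S * U))) := by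
  simp only [transpose_sub, Matrix.mul_sub, Matrix.sub_mul, trace_sub,
    trace_transpose_mul_mul_self S hQ, trace_transpose_mul_mul_self S hU,
    trace_transpose_mul_mul_comm hS Q U]
  ring

theorem trace_transpose_mul_mul_le (hS : S.PosSemidef) (hQ : Q * Qᵀ = 1) (hU : U * Uᵀ = 1) :
    trace (Qᵀ * (S * U)) ≤ trace S := by
  have gap_nonneg : 0 ≤ trace ((Q - U)ᵀ * (S * (Q - U))) := by
    simpa [Matrix.mul_assoc] using (hS.conjTranspose_mul_mul_same (Q - U)).trace_nonneg
  have hS_symm : S.IsSymm := isHermitian_iff_isSymm.mp hS.isHermitian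
  rw [trace_sub_transpose_mul_mul_sub hS_symm hQ hU] at gap_nonneg
  linarith

theorem trace_transpose_mul_mul_eq_iff (hS : S.PosSemidef) (hQ : Q * Qᵀ = 1) (hU : U * Uᵀ = 1) :
    trace (Qᵀ * (S * U)) = trace S ↔ S * Q = S * U := by
  refine ⟨fun h ↦ ?_, fun h ↦ by rw [← h, trace_transpose_mul_mul_self S hQ]⟩
  rw [← sub_eq_zero, ← Matrix.mul_sub]
  apply mul_eq_zero_of_trace_transpose_mul_mul_eq_zero hS
  have hS_symm : S.IsSymm := isHermitian_iff_isSymm.mp hS.isHermitian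
  rw [trace_sub_transpose_mul_mul_sub hS_symm hQ hU, h, sub_self, mul_zero]

end TraceMaximization

section NuclearNorm

open scoped MatrixOrder

theorem nuclearNorm_eq_sum_sqrt_eigenvalues {a b : ℕ} (hab : a ≤ b)
    (M : Matrix (Fin a) (Fin b) ℝ) :
    nuclearNorm M = ∑ i, √((isHermitian_mul_conjTranspose_self M).eigenvalues i) := by
  have length_eigList : (eigList M).length = a := by simp [eigList]
  calc nuclearNorm M
      = ∑ i ∈ Finset.range (eigList M).length, √((eigList M).getD i 0) := by
        simp [nuclearNorm, sval, length_eigList, min_eq_left hab]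
    _ = ∑ i : Fin (eigList M).length, √((eigList M)[i.1]) := by
        simp [Finset.sum_range]
    _ = ((eigList M : Multiset ℝ).map Real.sqrt).sum := by
        rw [Fin.sum_univ_fun_getElem, Multiset.map_coe, Multiset.sum_coe]
    _ = ∑ i, √((isHermitian_mul_conjTranspose_self M).eigenvalues i) := by
        rw [eigList, Multiset.coe_reverse, Multiset.sort_eq, Multiset.map_map]
        rfl

theorem nuclearNorm_eq_trace_sqrt {a b : ℕ} (hab : a ≤ b) (M : Matrix (Fin a) (Fin b) ℝ) :
    nuclearNorm M = trace (CFC.sqrt (M * Mᴴ)) := by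
  rw [nuclearNorm_eq_sum_sqrt_eigenvalues hab,
    trace_sqrt (posSemidef_self_mul_conjTranspose M)]
  rfl

variable {r : ℕ}

theorem mem_stiefel_self_iff {Q : Matrix (Fin r) (Fin r) ℝ} :
    Q ∈ Stiefel r r ↔ Q * Qᵀ = 1 :=
  mul_eq_one_comm

theorem exists_posSemidef_mul_eq_and_trace_eq_nuclearNorm (M : Matrix (Fin r) (Fin r) ℝ) :
    ∃ S : Matrix (Fin r) (Fin r) ℝ, ∃ U ∈ Stiefel r r,
      S.PosSemidef ∧ S * U = M ∧ S.trace = nuclearNorm M := by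
  obtain ⟨U, hU, hM⟩ := exists_polar_decomposition M
  exact ⟨CFC.sqrt (M * Mᴴ), U, mem_unitaryGroup_iff'.mp hU, (CFC.sqrt_nonneg _).posSemidef, hM,
    (nuclearNorm_eq_trace_sqrt le_rfl M).symm⟩

theorem trace_transpose_mul_le_nuclearNorm {Q : Matrix (Fin r) (Fin r) ℝ} (hQ : Q ∈ Stiefel r r)
    (M : Matrix (Fin r) (Fin r) ℝ) : trace (Qᵀ * M) ≤ nuclearNorm M := by
  obtain ⟨S, U, hU, hS, rfl, hn⟩ := exists_posSemidef_mul_eq_and_trace_eq_nuclearNorm M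
  rw [← hn]
  exact trace_transpose_mul_mul_le hS (mem_stiefel_self_iff.mp hQ) (mem_stiefel_self_iff.mp hU)

theorem exists_trace_transpose_mul_eq_nuclearNorm (M : Matrix (Fin r) (Fin r) ℝ) :
    ∃ Q ∈ Stiefel r r, trace (Qᵀ * M) = nuclearNorm M := by
  obtain ⟨S, U, hU, -, rfl, hn⟩ := exists_posSemidef_mul_eq_and_trace_eq_nuclearNorm M
  exact ⟨U, hU, by rw [trace_transpose_mul_mul_self S (mem_stiefel_self_iff.mp hU), hn]⟩

theorem eq_of_trace_transpose_mul_eq_nuclearNorm {M Q R : Matrix (Fin r) (Fin r) ℝ}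
    (hM : M.det ≠ 0) (hQ : Q ∈ Stiefel r r) (hR : R ∈ Stiefel r r)
    (hQM : trace (Qᵀ * M) = nuclearNorm M) (hRM : trace (Rᵀ * M) = nuclearNorm M) : Q = R := by
  obtain ⟨S, U, hU, hS, rfl, hn⟩ := exists_posSemidef_mul_eq_and_trace_eq_nuclearNorm M
  rw [mem_stiefel_self_iff] at hQ hR hU
  rw [← hn, trace_transpose_mul_mul_eq_iff hS ‹_› hU] at hQM hRM
  have hS_unit : IsUnit S :=
    (isUnit_iff_isUnit_det S).mpr (left_ne_zero_of_mul (det_mul S U ▸ hM)).isUnit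
  exact hS_unit.mul_left_cancel (hQM.trans hRM.symm)

end NuclearNorm

section Frobenius

variable {ι κ μ : Type*} [Fintype ι] [Fintype κ] [Fintype μ]

theorem froSq_eq_trace (M : Matrix ι κ ℝ) : froSq M = trace (Mᵀ * M) := by
  rw [froSq, Finset.sum_comm]
  simp only [trace, diag_apply, Matrix.mul_apply, transpose_apply, sq]

theorem froSq_sub (A B : Matrix ι κ ℝ) :
    froSq (A - B) = froSq A + froSq B - 2 * trace (Aᵀ * B) := by
  have h : trace (Bᵀ * A) = trace (Aᵀ * B) := by
    rw [← trace_transpose, transpose_mul, transpose_transpose]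
  simp only [froSq_eq_trace, transpose_sub, Matrix.sub_mul, Matrix.mul_sub, trace_sub, h]
  ring

theorem froSq_mul_of_transpose_mul_self_eq_one [DecidableEq κ] {A : Matrix ι κ ℝ}
    (hA : Aᵀ * A = 1) (M : Matrix κ μ ℝ) : froSq (A * M) = froSq M := by
  rw [froSq_eq_trace, froSq_eq_trace, transpose_mul, Matrix.mul_assoc, ← Matrix.mul_assoc Aᵀ, hA,
    Matrix.one_mul]

theorem sq_apply_le_froSq (M : Matrix ι κ ℝ) (i : ι) (j : κ) : M i j ^ 2 ≤ froSq M :=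
  calc M i j ^ 2
      ≤ ∑ j, M i j ^ 2 :=
        Finset.single_le_sum (f := fun j ↦ M i j ^ 2) (fun _ _ ↦ sq_nonneg _) (Finset.mem_univ j)
    _ ≤ froSq M :=
        Finset.single_le_sum (f := fun i ↦ ∑ j, M i j ^ 2)
          (fun _ _ ↦ Finset.sum_nonneg fun _ _ ↦ sq_nonneg _) (Finset.mem_univ i)

theorem continuous_froSq : Continuous (froSq : Matrix ι κ ℝ → ℝ) := by
  unfold froSq
  fun_prop

end Frobenius

section Stiefel

variable {m r s : ℕ}

theorem froSq_eq_of_mem_stiefel {Z : Matrix (Fin m) (Fin r) ℝ} (hZ : Z ∈ Stiefel m r) :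
    froSq Z = r := by
  rw [froSq_eq_trace, hZ, trace_one, Fintype.card_fin]

theorem mul_mem_stiefel {Z : Matrix (Fin m) (Fin r) ℝ} {Q : Matrix (Fin r) (Fin s) ℝ}
    (hZ : Z ∈ Stiefel m r) (hQ : Q ∈ Stiefel r s) : Z * Q ∈ Stiefel m s := by
  change (Z * Q)ᵀ * (Z * Q) = 1
  rw [transpose_mul, Matrix.mul_assoc, ← Matrix.mul_assoc Zᵀ, hZ, Matrix.one_mul, hQ]

theorem stiefel_nonempty (hrm : r ≤ m) : (Stiefel m r).Nonempty := by
  refine ⟨(1 : Matrix (Fin m) (Fin m) ℝ).submatrix id (Fin.castLE hrm), ?_⟩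
  change _ = _
  rw [transpose_submatrix, transpose_one, ← submatrix_mul _ _ _ _ _ Function.bijective_id,
    Matrix.one_mul, submatrix_one _ (Fin.castLE_injective hrm)]

theorem isCompact_stiefel (m r : ℕ) : IsCompact (Stiefel m r) := by
  have box_compact : IsCompact (Set.univ.pi fun _ : Fin m ↦ Set.univ.pi fun _ : Fin r ↦
      Set.Icc (-√r) √r) :=
    isCompact_univ_pi fun _ ↦ isCompact_univ_pi fun _ ↦ isCompact_Icc
  refine box_compact.of_isClosed_subset (isClosed_eq (by fun_prop) continuous_const) ?_
  intro Z hZ i _ j _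
  exact abs_le.mp (Real.abs_le_sqrt (froSq_eq_of_mem_stiefel hZ ▸ sq_apply_le_froSq Z i j))

end Stiefel

section HSet

variable {m p r : ℕ} {Y : Matrix (Fin m) (Fin p) ℝ}

theorem continuous_froSq_transpose_mul (Y : Matrix (Fin m) (Fin p) ℝ) :
    Continuous fun Z : Matrix (Fin m) (Fin r) ℝ ↦ froSq (Zᵀ * Y) :=
  continuous_froSq.comp (by fun_prop)

theorem hSet_nonempty (hrm : r ≤ m) (Y : Matrix (Fin m) (Fin p) ℝ) : (HSet Y r).Nonempty := by
  obtain ⟨Z, hZ, hmax⟩ := (isCompact_stiefel m r).exists_isMaxOn (stiefel_nonempty hrm)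
    (continuous_froSq_transpose_mul Y).continuousOn
  exact ⟨Z, hZ, fun W hW ↦ hmax hW⟩

theorem isCompact_hSet (Y : Matrix (Fin m) (Fin p) ℝ) (r : ℕ) : IsCompact (HSet Y r) := by
  have hSet_eq : HSet Y r =
      Stiefel m r ∩ ⋂ W ∈ Stiefel m r, {Z | froSq (Wᵀ * Y) ≤ froSq (Zᵀ * Y)} := by
    ext Z
    simp [HSet]
  rw [hSet_eq]
  exact (isCompact_stiefel m r).inter_right <| isClosed_biInter fun W _ ↦
    isClosed_le continuous_const (continuous_froSq_transpose_mul Y)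

theorem mul_mem_hSet {Z : Matrix (Fin m) (Fin r) ℝ} {Q : Matrix (Fin r) (Fin r) ℝ}
    (hZ : Z ∈ HSet Y r) (hQ : Q ∈ Stiefel r r) : Z * Q ∈ HSet Y r := by
  refine ⟨mul_mem_stiefel hZ.1 hQ, ?_⟩
  rw [transpose_mul, Matrix.mul_assoc,
    froSq_mul_of_transpose_mul_self_eq_one (A := Qᵀ) (mem_stiefel_self_iff.mp hQ)]
  exact hZ.2

end HSet

section IsProj

variable {m p r : ℕ} {Y : Matrix (Fin m) (Fin p) ℝ} {X Z : Matrix (Fin m) (Fin r) ℝ}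

theorem exists_isProj (hrm : r ≤ m) (Y : Matrix (Fin m) (Fin p) ℝ)
    (X : Matrix (Fin m) (Fin r) ℝ) : ∃ Z, IsProj Y X Z := by
  have dist_continuous : Continuous fun Z : Matrix (Fin m) (Fin r) ℝ ↦ froSq (Z - X) :=
    continuous_froSq.comp (by fun_prop)
  obtain ⟨Z, hZ, hmin⟩ :=
    (isCompact_hSet Y r).exists_isMinOn (hSet_nonempty hrm Y) dist_continuous.continuousOn
  exact ⟨Z, hZ, fun W hW ↦ hmin hW⟩

namespace IsProj

theorem trace_le (hZ : IsProj Y X Z) {W : Matrix (Fin m) (Fin r) ℝ} (hW : W ∈ HSet Y r) :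
    trace (Wᵀ * X) ≤ trace (Zᵀ * X) := by
  have h := hZ.2 W hW
  rw [froSq_sub, froSq_sub, froSq_eq_of_mem_stiefel hZ.1.1, froSq_eq_of_mem_stiefel hW.1] at h
  linarith

theorem nuclearNorm_le_trace (hZ : IsProj Y X Z) {V : Matrix (Fin m) (Fin r) ℝ}
    (hV : V ∈ HSet Y r) : nuclearNorm (Vᵀ * X) ≤ trace (Zᵀ * X) := by
  obtain ⟨Q, hQ, hq⟩ := exists_trace_transpose_mul_eq_nuclearNorm (Vᵀ * X)
  rw [← hq, ← Matrix.mul_assoc, ← transpose_mul]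
  exact hZ.trace_le (mul_mem_hSet hV hQ)

theorem trace_eq_nuclearNorm (hZ : IsProj Y X Z) : trace (Zᵀ * X) = nuclearNorm (Zᵀ * X) := by
  refine le_antisymm ?_ (hZ.nuclearNorm_le_trace hZ.1)
  simpa using trace_transpose_mul_le_nuclearNorm (Q := 1) (by simp [Stiefel]) (Zᵀ * X)

theorem nucMax (hZ : IsProj Y X Z) : NucMax Y X Z :=
  ⟨hZ.1, fun _ hV ↦ (hZ.nuclearNorm_le_trace hV).trans_eq hZ.trace_eq_nuclearNorm⟩

end IsProj

end IsProj

theorem exists_mem_stiefel_mul_eq_of_mul_transpose_eq {m r : ℕ} {Z T : Matrix (Fin m) (Fin r) ℝ}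
    (hT : T ∈ Stiefel m r) (h : T * Tᵀ = Z * Zᵀ) : ∃ Q ∈ Stiefel r r, Z * Q = T := by
  have hZT : Z * (Zᵀ * T) = T := by
    rw [← Matrix.mul_assoc, ← h, Matrix.mul_assoc, hT, Matrix.mul_one]
  refine ⟨Zᵀ * T, ?_, hZT⟩
  change (Zᵀ * T)ᵀ * (Zᵀ * T) = 1
  rw [transpose_mul, transpose_transpose, Matrix.mul_assoc, hZT, hT]

theorem stmt2_general {m p r : ℕ} (hrm : r ≤ m) (Y : Matrix (Fin m) (Fin p) ℝ)
    (X : Matrix (Fin m) (Fin r) ℝ) (hU : UniqCond Y r X) : ∃! Z, IsProj Y X Z := by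
  obtain ⟨Z, hZ⟩ := exists_isProj hrm Y X
  refine ⟨Z, hZ, fun T hT ↦ ?_⟩
  have same_range : T * Tᵀ = Z * Zᵀ := hU.2 T Z hT.nucMax hZ.nucMax
  obtain ⟨Q, hQ, rfl⟩ := exists_mem_stiefel_mul_eq_of_mul_transpose_eq hT.1.1 same_range
  have trace_Q : trace (Qᵀ * (Zᵀ * X)) = nuclearNorm (Zᵀ * X) := by
    rw [← Matrix.mul_assoc, ← transpose_mul, ← hZ.trace_eq_nuclearNorm]
    exact le_antisymm (hZ.trace_le hT.1) (hT.trace_le hZ.1)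
  have trace_one : trace (1ᵀ * (Zᵀ * X)) = nuclearNorm (Zᵀ * X) := by
    rw [transpose_one, Matrix.one_mul, hZ.trace_eq_nuclearNorm]
  have hQ_one : Q = 1 := eq_of_trace_transpose_mul_eq_nuclearNorm (hU.1 Z hZ.nucMax) hQ
    (by simp [Stiefel]) trace_Q trace_one
  rw [hQ_one, Matrix.mul_one]

/-- If `X ∈ O_{m×r}` satisfies the uniqueness conditions for `(Y,r)`,
then the problem of minimizing `‖Z − X‖_F²` over `H_{Y,r}` has a unique solution. -/
theorem stmt2 {m p r : ℕ} (hr1 : 1 ≤ r) (hrm : r ≤ m)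
    (Y : Matrix (Fin m) (Fin p) ℝ)
    (X : Matrix (Fin m) (Fin r) ℝ) (hX : X ∈ Stiefel m r)
    (hU : UniqCond Y r X) :
    ∃! Z : Matrix (Fin m) (Fin r) ℝ, IsProj Y X Z :=
  stmt2_general hrm Y X hU
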